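/- arXiv:2512.12601 — 4 statements merged into one kernel-verified Lean document; each statement's English description precedes it below -/
import Mathlib

section
/- Let l_1, ..., l_N be unit vectors in ℝ^n that positively span ℝ^n and such that any n of them are linearly independent. Then there exists a constant c > 0, depending only on l_1, ..., l_N, with the following property: for all ε > 0, k_f > 0, and b ∈ ℝ^n, the unique minimizer s* of the quadratic program QP(b) satisfies |k_f ∑_{i=1}^N s_i* l_i − b|^2 ≤ ε c |b|^2 / k_f^2. -/
open InnerProductSpace

/-!
Since the `l i` positively span, compactness of the unit sphere gives `δ > 0` with
`δ * ‖x‖ ^ 2 ≤ ∑ i, ⟪x, l i⟫⁺ ^ 2` for all `x`. If `s` minimizes the quadratic program and `r` is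
its residual, the first-order conditions say `⟪-k • r, l i⟫ ≤ ε * s i`, so taking `x = -k • r` gives
`δ * k ^ 2 * ‖r‖ ^ 2 ≤ ε ^ 2 * ∑ i, s i ^ 2`. Comparing `s` with the competitor `0` shows
`ε * ∑ i, s i ^ 2 ≤ ‖b‖ ^ 2`, and the constant `c = δ⁻¹` works.
-/

open Filter Topology

theorem exists_pos_forall_mul_norm_pow_le {E : Type*} [NormedAddCommGroup E] [NormedSpace ℝ E]
    [FiniteDimensional ℝ E] {f : E → ℝ} {p : ℕ} (hp : p ≠ 0) (hf : Continuous f)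
    (hhom : ∀ a : ℝ, 0 ≤ a → ∀ x, f (a • x) = a ^ p * f x) (hpos : ∀ x, ‖x‖ = 1 → 0 < f x) :
    ∃ δ > 0, ∀ x, δ * ‖x‖ ^ p ≤ f x := by
  obtain ⟨δ, hδ, hsphere⟩ := (isCompact_sphere (0 : E) 1).exists_forall_le' hf.continuousOn
    fun x hx => hpos x (mem_sphere_zero_iff_norm.mp hx)
  refine ⟨δ, hδ, fun x => ?_⟩
  rcases eq_or_ne x 0 with rfl | hx
  · have hzero : f 0 = 0 := by simpa [hp] using hhom 0 le_rfl 0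
    simp [hzero, hp]
  · have hunit : ‖‖x‖⁻¹ • x‖ = 1 := norm_smul_inv_norm (𝕜 := ℝ) hx
    calc δ * ‖x‖ ^ p ≤ f (‖x‖⁻¹ • x) * ‖x‖ ^ p := by
          gcongr
          exact hsphere _ (mem_sphere_zero_iff_norm.mpr hunit)
      _ = f (‖x‖ • ‖x‖⁻¹ • x) := by rw [hhom _ (norm_nonneg x), mul_comm]
      _ = f x := by rw [smul_inv_smul₀ (norm_ne_zero_iff.mpr hx)]

theorem nonneg_of_forall_pos_mul_add_sq_mul_nonneg {a b : ℝ}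
    (h : ∀ t : ℝ, 0 < t → 0 ≤ t * a + t ^ 2 * b) : 0 ≤ a := by
  have hlim : Tendsto (fun t : ℝ => a + t * b) (𝓝[>] 0) (𝓝 a) := by
    have hcont : Continuous fun t : ℝ => a + t * b := by fun_prop
    simpa using (hcont.tendsto 0).mono_left nhdsWithin_le_nhds
  refine ge_of_tendsto hlim (eventually_mem_nhdsWithin.mono fun t ht => ?_)
  refine nonneg_of_mul_nonneg_right ?_ (Set.mem_Ioi.mp ht)
  linear_combination h t ht

section QuadraticProgram

variable {ι E : Type*} [NormedAddCommGroup E] [InnerProductSpace ℝ E]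

/-- A family positively spans `E` if no closed half-space `{y | ⟪x, y⟫ ≤ 0}`, `x` a unit vector,
contains it. -/
def PositivelySpanning (l : ι → E) : Prop :=
  ∀ x : E, ‖x‖ = 1 → ∃ i, 0 < ⟪x, l i⟫_ℝ

namespace PositivelySpanning

variable {l : ι → E}

theorem span_range_eq_top [Finite ι] (hl : PositivelySpanning l) :
    Submodule.span ℝ (Set.range l) = ⊤ := by
  have := FiniteDimensional.span_of_finite ℝ (Set.finite_range l)
  refine Submodule.orthogonal_eq_bot_iff.mp ((Submodule.eq_bot_iff _).mpr fun x hx => ?_)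
  by_contra hx0
  obtain ⟨i, hi⟩ := hl (‖x‖⁻¹ • x) (norm_smul_inv_norm (𝕜 := ℝ) hx0)
  have horth : ⟪x, l i⟫_ℝ = 0 :=
    Submodule.inner_left_of_mem_orthogonal (Submodule.subset_span (Set.mem_range_self i)) hx
  simp [real_inner_smul_left, horth] at hi

theorem finiteDimensional [Finite ι] (hl : PositivelySpanning l) : FiniteDimensional ℝ E :=
  .of_fg_top ⟨(Set.finite_range l).toFinset, by simpa using hl.span_range_eq_top⟩

theorem exists_mul_norm_sq_le [Fintype ι] (hl : PositivelySpanning l) :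
    ∃ δ > 0, ∀ x : E, δ * ‖x‖ ^ 2 ≤ ∑ i, (⟪x, l i⟫_ℝ)⁺ ^ 2 := by
  have := hl.finiteDimensional
  refine exists_pos_forall_mul_norm_pow_le two_ne_zero ?_ (fun a ha x => ?_) fun x hx => ?_
  · simp only [posPart_def]
    fun_prop
  · simp only [posPart_def, real_inner_smul_left, Finset.mul_sum, ← mul_pow,
      mul_max_of_nonneg _ _ ha, mul_zero]
  · obtain ⟨i, hi⟩ := hl x hx
    exact Finset.sum_pos' (fun j _ => sq_nonneg _)
      ⟨i, Finset.mem_univ i, pow_pos (posPart_pos hi) 2⟩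

end PositivelySpanning

variable [Fintype ι]

/-- The residual `k ∑ sᵢ lᵢ - b` of the coefficients `s` in the quadratic program. -/
def qpResidual (k : ℝ) (l : ι → E) (b : E) (s : ι → ℝ) : E :=
  k • ∑ i, s i • l i - b

/-- The objective `ε ∑ sᵢ² + |k ∑ sᵢ lᵢ - b|²` of the quadratic program `QP(b)`. Its feasible set
`s ≥ 0` is `Set.Ici 0` in the pointwise order on `ι → ℝ`. -/
def qpObjective (ε k : ℝ) (l : ι → E) (b : E) (s : ι → ℝ) : ℝ :=
  ε * ∑ i, s i ^ 2 + ‖qpResidual k l b s‖ ^ 2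

variable {ε k : ℝ} {l : ι → E} {b : E} {s : ι → ℝ}

theorem qpObjective_add_single [DecidableEq ι] (i : ι) (t : ℝ) :
    qpObjective ε k l b (s + Pi.single i t) = qpObjective ε k l b s +
      (t * (2 * (ε * s i + k * ⟪qpResidual k l b s, l i⟫_ℝ)) +
        t ^ 2 * (ε + k ^ 2 * ‖l i‖ ^ 2)) := by
  have hsq : ∑ j, (s + Pi.single i t : ι → ℝ) j ^ 2 = ∑ j, s j ^ 2 + (2 * s i * t + t ^ 2) := by
    simp [add_sq, Finset.sum_add_distrib, Pi.single_apply, add_assoc]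
  have hres : qpResidual k l b (s + Pi.single i t) = qpResidual k l b s + (k * t) • l i := by
    simp only [qpResidual, Pi.add_apply, add_smul, Finset.sum_add_distrib, smul_add, mul_smul,
      Pi.single_apply, ite_smul, zero_smul, Finset.sum_ite_eq', Finset.mem_univ, if_true]
    abel
  rw [qpObjective, qpObjective, hsq, hres, norm_add_sq_real, real_inner_smul_right, norm_smul,
    mul_pow, Real.norm_eq_abs, sq_abs]
  ring

theorem inner_neg_smul_qpResidual_le_of_isMinOn (hs : 0 ≤ s)
    (hmin : IsMinOn (qpObjective ε k l b) (Set.Ici 0) s) (i : ι) :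
    ⟪-k • qpResidual k l b s, l i⟫_ℝ ≤ ε * s i := by
  classical
  have hderiv : 0 ≤ 2 * (ε * s i + k * ⟪qpResidual k l b s, l i⟫_ℝ) := by
    refine nonneg_of_forall_pos_mul_add_sq_mul_nonneg (b := ε + k ^ 2 * ‖l i‖ ^ 2) fun t ht => ?_
    have hfeas : s + Pi.single i t ∈ Set.Ici 0 := add_nonneg hs (Pi.single_nonneg.mpr ht.le)
    have hle := isMinOn_iff.mp hmin _ hfeas
    rwa [qpObjective_add_single, le_add_iff_nonneg_right] at hle
  rw [real_inner_smul_left]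
  linarith

theorem mul_sum_sq_le_norm_sq_of_isMinOn
    (hmin : IsMinOn (qpObjective ε k l b) (Set.Ici 0) s) : ε * ∑ i, s i ^ 2 ≤ ‖b‖ ^ 2 :=
  calc ε * ∑ i, s i ^ 2 ≤ qpObjective ε k l b s := le_add_of_nonneg_right (sq_nonneg _)
    _ ≤ qpObjective ε k l b 0 := isMinOn_iff.mp hmin 0 Set.self_mem_Ici
    _ = ‖b‖ ^ 2 := by simp [qpObjective, qpResidual]

theorem sum_posPart_inner_sq_le_of_isMinOn (hε : 0 ≤ ε) (hs : 0 ≤ s)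
    (hmin : IsMinOn (qpObjective ε k l b) (Set.Ici 0) s) :
    ∑ i, (⟪-k • qpResidual k l b s, l i⟫_ℝ)⁺ ^ 2 ≤ ε * ‖b‖ ^ 2 :=
  calc ∑ i, (⟪-k • qpResidual k l b s, l i⟫_ℝ)⁺ ^ 2 ≤ ∑ i, (ε * s i) ^ 2 := by
        gcongr with i
        exact sup_le (inner_neg_smul_qpResidual_le_of_isMinOn hs hmin i) (mul_nonneg hε (hs i))
    _ = ε * (ε * ∑ i, s i ^ 2) := by
        simp only [mul_pow, ← Finset.mul_sum]
        ring
    _ ≤ ε * ‖b‖ ^ 2 := by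
        gcongr
        exact mul_sum_sq_le_norm_sq_of_isMinOn hmin

theorem stmt_3_general (hl : PositivelySpanning l) :
    ∃ c : ℝ, 0 < c ∧ ∀ ε k : ℝ, 0 ≤ ε → k ≠ 0 → ∀ (b : E) (s : ι → ℝ), 0 ≤ s →
      IsMinOn (qpObjective ε k l b) (Set.Ici 0) s →
        ‖qpResidual k l b s‖ ^ 2 ≤ ε * c * ‖b‖ ^ 2 / k ^ 2 := by
  obtain ⟨δ, hδ, hlower⟩ := hl.exists_mul_norm_sq_le
  refine ⟨δ⁻¹, inv_pos.mpr hδ, fun ε k hε hk b s hs hmin => ?_⟩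
  have hresidual : δ * (k ^ 2 * ‖qpResidual k l b s‖ ^ 2) ≤ ε * ‖b‖ ^ 2 :=
    calc δ * (k ^ 2 * ‖qpResidual k l b s‖ ^ 2) = δ * ‖-k • qpResidual k l b s‖ ^ 2 := by
          rw [norm_smul, mul_pow, norm_neg, Real.norm_eq_abs, sq_abs]
      _ ≤ ∑ i, (⟪-k • qpResidual k l b s, l i⟫_ℝ)⁺ ^ 2 := hlower _
      _ ≤ ε * ‖b‖ ^ 2 := sum_posPart_inner_sq_le_of_isMinOn hε hs hmin
  have hk2 : 0 < k ^ 2 := by positivity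
  calc ‖qpResidual k l b s‖ ^ 2 ≤ ε * ‖b‖ ^ 2 / δ / k ^ 2 := by
        rwa [le_div_iff₀' hk2, le_div_iff₀' hδ]
    _ = ε * δ⁻¹ * ‖b‖ ^ 2 / k ^ 2 := by ring

end QuadraticProgram

/-- If the unit vectors `l₁, …, l_N` positively span `ℝⁿ` and any `n`
of them are linearly independent, then there is `c > 0` depending only on the `lᵢ`
such that for all `ε, k_f > 0` and all `b`, the unique minimizer `s*` of `QP(b)`
satisfies `‖k_f ∑ᵢ sᵢ* lᵢ − b‖² ≤ ε c ‖b‖² / k_f²`. -/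
theorem stmt_3 {n N : ℕ} (L : Fin N → EuclideanSpace ℝ (Fin n))
    (hunit : ∀ i, ‖L i‖ = 1)
    (hspan : ∀ l : EuclideanSpace ℝ (Fin n), ‖l‖ = 1 → ∃ i, 0 < ⟪l, L i⟫_ℝ)
    (hindep : ∀ g : Fin n → Fin N, Function.Injective g →
      LinearIndependent ℝ (fun j => L (g j))) :
    ∃ c : ℝ, 0 < c ∧
      ∀ ε kf : ℝ, 0 < ε → 0 < kf → ∀ b : EuclideanSpace ℝ (Fin n),
        ∀ s : Fin N → ℝ,
          ((∀ i, 0 ≤ s i) ∧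
            ∀ s' : Fin N → ℝ, (∀ i, 0 ≤ s' i) →
              ε * ∑ i, s i ^ 2 + ‖kf • ∑ i, s i • L i - b‖ ^ 2 ≤
                ε * ∑ i, s' i ^ 2 + ‖kf • ∑ i, s' i • L i - b‖ ^ 2) →
          ‖kf • ∑ i, s i • L i - b‖ ^ 2 ≤ ε * c * ‖b‖ ^ 2 / kf ^ 2 := by
  obtain ⟨c, hc, hbound⟩ := stmt_3_general (l := L) hspan
  exact ⟨c, hc, fun ε kf hε hkf b s ⟨hs, hmin⟩ => hbound ε kf hε.le hkf.ne' b s hs hmin⟩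
end

section
/- Let R ∈ ℝ^{N×N} be a symmetric positive definite matrix. For each r ∈ ℝ^N, the function s ↦ (1/2) sᵀ R s + rᵀ s attains a unique minimum over the set {s ∈ ℝ^N : s_i ≥ 0 for all i}; denote the minimizer by S(r). Then the map S : ℝ^N → ℝ^N is Lipschitz continuous: there exists a constant L > 0 such that |S(r_1) − S(r_2)| ≤ L |r_1 − r_2| for all r_1, r_2 ∈ ℝ^N. -/
open Matrix

/-!
A minimizer `x` of a strongly convex function over a convex set has quadratic growth: the value at
any feasible `y` exceeds the minimum by at least `m / 2 * ‖x - y‖ ^ 2`, because moving from `x`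
towards `y` cannot decrease the function. If `x` and `y` minimize two linear perturbations
`f + ℓ₁` and `f + ℓ₂` of the same function, adding the two growth inequalities cancels `f` and
leaves `m * ‖x - y‖ ^ 2 ≤ (ℓ₂ - ℓ₁) (x - y)`, so that `m * ‖x - y‖ ≤ ‖ℓ₁ - ℓ₂‖`. A positive
definite quadratic form is strongly convex, since its infimum over the compact unit sphere is
positive.
-/

section UniformConvexity

variable {E : Type*} [NormedAddCommGroup E] [NormedSpace ℝ E]
  {K : Set E} {f : E → ℝ} {x y : E}

lemma uniformConvexOn_add_clm {φ : ℝ → ℝ} (hf : UniformConvexOn K φ f) (ℓ : StrongDual ℝ E) :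
    UniformConvexOn K φ (fun s ↦ f s + ℓ s) := by
  simpa only [add_zero] using! hf.add (ℓ.toLinearMap.convexOn hf.1).uniformConvexOn_zero

lemma add_modulus_le_of_isMinOn {φ : ℝ → ℝ} (hf : UniformConvexOn K φ f) (hx : x ∈ K)
    (hmin : IsMinOn f K x) (hy : y ∈ K) : f x + φ ‖x - y‖ ≤ f y := by
  have growth_toward : ∀ t ∈ Set.Ioo (0 : ℝ) 1, f x + t * φ ‖x - y‖ ≤ f y := by
    intro t ⟨ht₀, ht₁⟩
    have ht : 0 < 1 - t := sub_pos.2 ht₁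
    have hconv := hf.2 hx hy ht₀.le ht.le (add_sub_cancel t 1)
    have hle : f x ≤ f (t • x + (1 - t) • y) :=
      hmin (hf.1 hx hy ht₀.le ht.le (add_sub_cancel t 1))
    refine le_of_mul_le_mul_left ?_ ht
    simp only [smul_eq_mul] at hconv
    linarith
  have hcont : Continuous fun t : ℝ ↦ f x + t * φ ‖x - y‖ := by fun_prop
  have hlim := (hcont.tendsto 1).mono_left (nhdsWithin_le_nhds (s := Set.Iio 1))
  rw [one_mul] at hlim
  exact le_of_tendsto hlim
    (Filter.mem_of_superset (Ioo_mem_nhdsLT one_pos) growth_toward)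

lemma two_mul_modulus_le_of_isMinOn_add_clm {φ : ℝ → ℝ} {ℓ₁ ℓ₂ : StrongDual ℝ E}
    (hf : UniformConvexOn K φ f) (hx : x ∈ K) (hxmin : IsMinOn (fun s ↦ f s + ℓ₁ s) K x)
    (hy : y ∈ K) (hymin : IsMinOn (fun s ↦ f s + ℓ₂ s) K y) :
    2 * φ ‖x - y‖ ≤ (ℓ₂ - ℓ₁) (x - y) := by
  have hxy := add_modulus_le_of_isMinOn (uniformConvexOn_add_clm hf ℓ₁) hx hxmin hy
  have hyx := add_modulus_le_of_isMinOn (uniformConvexOn_add_clm hf ℓ₂) hy hymin hx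
  rw [norm_sub_rev] at hyx
  simp only [_root_.sub_apply, map_sub]
  linarith

lemma mul_norm_sub_le_of_isMinOn_add_clm {m : ℝ} {ℓ₁ ℓ₂ : StrongDual ℝ E}
    (hf : StrongConvexOn K m f) (hx : x ∈ K) (hxmin : IsMinOn (fun s ↦ f s + ℓ₁ s) K x)
    (hy : y ∈ K) (hymin : IsMinOn (fun s ↦ f s + ℓ₂ s) K y) :
    m * ‖x - y‖ ≤ ‖ℓ₁ - ℓ₂‖ := by
  rcases (norm_nonneg (x - y)).eq_or_lt' with hxy | hxy
  · simp [hxy]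
  refine le_of_mul_le_mul_right ?_ hxy
  calc m * ‖x - y‖ * ‖x - y‖ = 2 * (m / 2 * ‖x - y‖ ^ 2) := by ring
    _ ≤ (ℓ₂ - ℓ₁) (x - y) := two_mul_modulus_le_of_isMinOn_add_clm hf hx hxmin hy hymin
    _ ≤ ‖ℓ₂ - ℓ₁‖ * ‖x - y‖ := (Real.le_norm_self _).trans ((ℓ₂ - ℓ₁).le_opNorm _)
    _ = ‖ℓ₁ - ℓ₂‖ * ‖x - y‖ := by rw [norm_sub_rev]

end UniformConvexity

section QuadraticForms

variable {E : Type*} [NormedAddCommGroup E] [NormedSpace ℝ E]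

lemma continuous_quadraticForm [FiniteDimensional ℝ E] (Q : QuadraticForm ℝ E) :
    Continuous Q := by
  have hB : Continuous fun x ↦ (QuadraticMap.associated Q).toContinuousBilinearMap x x := by
    fun_prop
  simpa only [LinearMap.toContinuousBilinearMap_apply,
    QuadraticMap.associated_eq_self_apply] using hB

lemma exists_pos_forall_mul_norm_sq_le_of_posDef [FiniteDimensional ℝ E] {Q : QuadraticForm ℝ E}
    (hQ : Q.PosDef) : ∃ c > 0, ∀ x, c * ‖x‖ ^ 2 ≤ Q x := by
  have : ProperSpace E := FiniteDimensional.proper ℝ E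
  obtain ⟨c, hc, hsphere⟩ : ∃ c, 0 < c ∧ ∀ u ∈ Metric.sphere (0 : E) 1, c ≤ Q u :=
    (isCompact_sphere 0 1).exists_forall_le' (continuous_quadraticForm Q).continuousOn
      fun u hu ↦ hQ u (ne_zero_of_mem_unit_sphere ⟨u, hu⟩)
  refine ⟨c, hc, fun x ↦ ?_⟩
  rcases eq_or_ne x 0 with rfl | hx
  · simp
  have hunit : ‖x‖⁻¹ • x ∈ Metric.sphere (0 : E) 1 := by simp [norm_smul, hx]
  calc c * ‖x‖ ^ 2 ≤ Q (‖x‖⁻¹ • x) * ‖x‖ ^ 2 := by gcongr; exact hsphere _ hunit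
    _ = Q x := by
      rw [QuadraticMap.map_smul, smul_eq_mul]
      field_simp

lemma quadraticForm_smul_add_smul {V : Type*} [AddCommGroup V] [Module ℝ V]
    (Q : QuadraticForm ℝ V) {a b : ℝ} (hab : a + b = 1) (x y : V) :
    Q (a • x + b • y) = a * Q x + b * Q y - a * b * Q (x - y) := by
  simp only [sub_eq_add_neg x, QuadraticMap.map_add Q, QuadraticMap.map_smul,
    QuadraticMap.map_neg, QuadraticMap.polar_smul_left, QuadraticMap.polar_smul_right,
    QuadraticMap.polar_neg_right, smul_eq_mul]
  obtain rfl := eq_sub_of_add_eq hab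
  ring

lemma strongConvexOn_quadraticForm {Q : QuadraticForm ℝ E} {m : ℝ}
    (hQ : ∀ x, m / 2 * ‖x‖ ^ 2 ≤ Q x) {K : Set E} (hK : Convex ℝ K) : StrongConvexOn K m Q := by
  refine ⟨hK, fun x _ y _ a b ha hb hab ↦ ?_⟩
  rw [quadraticForm_smul_add_smul Q hab, smul_eq_mul, smul_eq_mul]
  gcongr
  exact hQ (x - y)

lemma exists_pos_strongConvexOn_of_posDef [FiniteDimensional ℝ E] {Q : QuadraticForm ℝ E}
    (hQ : Q.PosDef) {K : Set E} (hK : Convex ℝ K) : ∃ m > 0, StrongConvexOn K m Q := by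
  obtain ⟨c, hc, hcoercive⟩ := exists_pos_forall_mul_norm_sq_le_of_posDef hQ
  exact ⟨2 * c, by positivity, strongConvexOn_quadraticForm (by simpa using hcoercive) hK⟩

lemma exists_pos_strongConvexOn_of_matrix_posDef {ι : Type*} [Fintype ι] {R : Matrix ι ι ℝ}
    (hR : R.PosDef) {K : Set (EuclideanSpace ℝ ι)} (hK : Convex ℝ K) :
    ∃ m > 0, StrongConvexOn K m fun s ↦ (1 / 2) * (s.ofLp ⬝ᵥ R *ᵥ s.ofLp) := by
  classical
  let Q : QuadraticForm ℝ (EuclideanSpace ℝ ι) :=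
    (1 / 2 : ℝ) • R.toQuadraticForm'.comp (WithLp.linearEquiv 2 ℝ (ι → ℝ)).toLinearMap
  have hQ_apply : ⇑Q = fun s ↦ (1 / 2) * (s.ofLp ⬝ᵥ R *ᵥ s.ofLp) := by
    ext s
    simp [Q, Matrix.toQuadraticForm', Matrix.toLinearMap₂'_apply']
  have hQ : Q.PosDef := .smul
    (fun s hs ↦ hR.toQuadraticForm' s.ofLp ((WithLp.ofLp_eq_zero 2).ne.2 hs)) (by norm_num)
  exact hQ_apply ▸ exists_pos_strongConvexOn_of_posDef hQ hK

end QuadraticForms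

lemma convex_setOf_forall_nonneg (ι : Type*) :
    Convex ℝ {s : EuclideanSpace ℝ ι | ∀ i, 0 ≤ s i} :=
  fun _ hs _ ht _ _ ha hb _ i ↦ add_nonneg (mul_nonneg ha (hs i)) (mul_nonneg hb (ht i))

theorem stmt_5_general {E : Type*} [NormedAddCommGroup E] [InnerProductSpace ℝ E] {K : Set E}
    {f : E → ℝ} {m : ℝ} (hm : 0 < m) (hf : StrongConvexOn K m f) {S : E → E}
    (hfeas : ∀ r, S r ∈ K) (hmin : ∀ r, IsMinOn (fun s ↦ f s + inner ℝ r s) K (S r)) (r₁ r₂ : E) :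
    ‖S r₁ - S r₂‖ ≤ m⁻¹ * ‖r₁ - r₂‖ := by
  rw [le_inv_mul_iff₀ hm, ← innerSL_apply_norm (𝕜 := ℝ) (r₁ - r₂), map_sub]
  exact mul_norm_sub_le_of_isMinOn_add_clm hf (hfeas r₁) (hmin r₁) (hfeas r₂) (hmin r₂)

/-- Let `R` be a symmetric positive definite `N × N` real matrix and,
for each `r ∈ ℝᴺ`, let `S r` be the unique minimizer of `s ↦ ½ sᵀ R s + rᵀ s` over
the nonnegative orthant. Then `S` is Lipschitz continuous (in the Euclidean norm). -/
theorem stmt_5 {N : ℕ} (R : Matrix (Fin N) (Fin N) ℝ)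
    (hsymm : R.IsSymm) (hpd : R.PosDef)
    (S : EuclideanSpace ℝ (Fin N) → EuclideanSpace ℝ (Fin N))
    (hfeas : ∀ r : EuclideanSpace ℝ (Fin N), ∀ i, 0 ≤ S r i)
    (hmin : ∀ r : EuclideanSpace ℝ (Fin N), ∀ s : Fin N → ℝ, (∀ i, 0 ≤ s i) →
      (1 / 2) * ((fun i => S r i) ⬝ᵥ R *ᵥ fun i => S r i) + ((fun i => r i) ⬝ᵥ fun i => S r i) ≤
        (1 / 2) * (s ⬝ᵥ R *ᵥ s) + ((fun i => r i) ⬝ᵥ s))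
    (huniq : ∀ r : EuclideanSpace ℝ (Fin N), ∀ s : Fin N → ℝ, (∀ i, 0 ≤ s i) →
      (∀ s' : Fin N → ℝ, (∀ i, 0 ≤ s' i) →
        (1 / 2) * (s ⬝ᵥ R *ᵥ s) + ((fun i => r i) ⬝ᵥ s) ≤
          (1 / 2) * (s' ⬝ᵥ R *ᵥ s') + ((fun i => r i) ⬝ᵥ s')) →
      s = fun i => S r i) :
    ∃ Lc : ℝ, 0 < Lc ∧
      ∀ r₁ r₂ : EuclideanSpace ℝ (Fin N), ‖S r₁ - S r₂‖ ≤ Lc * ‖r₁ - r₂‖ := by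
  obtain ⟨m, hm, hf⟩ := exists_pos_strongConvexOn_of_matrix_posDef hpd
    (convex_setOf_forall_nonneg (Fin N))
  refine ⟨m⁻¹, inv_pos.2 hm, stmt_5_general hm hf hfeas fun r s hs ↦ ?_⟩
  simpa [PiLp.inner_apply, dotProduct, mul_comm] using hmin r s hs
end

section
/- Let δ ∈ (0, 1), k_v > 0, L_f > 0, L_φ > 0, and let N be a positive integer. Suppose k_p > ((2 − δ)/(1 − δ)) · N L_φ L_f. Then the 2×2 real matrix A = [[−(1−δ) k_v, L_f], [N L_φ k_v, −k_p + N L_φ L_f]] is Hurwitz, i.e., every eigenvalue of A has strictly negative real part. -/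
open Matrix Polynomial

/-! A real `2 × 2` matrix with negative trace and positive determinant is Hurwitz. Here the
determinant is `(1 - δ) k_v` times the distance of `k_p` from its threshold, and the trace is
negative because the threshold is at least `N L_φ L_f`. -/

/-- A real square matrix is Hurwitz if all its complex eigenvalues, taken as the roots over `ℂ` of
its characteristic polynomial, have negative real part; this is the asymptotic stability criterion
for the linear system with matrix `A`. -/
def IsHurwitz {n : Type*} [Fintype n] [DecidableEq n] (A : Matrix n n ℝ) : Prop :=
  ∀ μ : ℂ, (A.map (algebraMap ℝ ℂ)).charpoly.IsRoot μ → μ.re < 0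

theorem re_neg_of_sq_add_mul_add_eq_zero {a b : ℝ} {z : ℂ} (ha : 0 < a) (hb : 0 < b)
    (hz : z ^ 2 + a * z + b = 0) : z.re < 0 := by
  have hz_ne : z ≠ 0 := by
    rintro rfl
    simp [hb.ne'] at hz
  have normSq_pos : 0 < Complex.normSq z := Complex.normSq_pos.mpr hz_ne
  -- The real part of `conj z * (z ^ 2 + a * z + b) = 0`.
  have re_mul_eq : z.re * (Complex.normSq z + b) = -(a * Complex.normSq z) := by
    have h := congrArg Complex.re (congrArg (starRingEnd ℂ z * ·) hz)
    simp only [pow_two, Complex.mul_re, Complex.mul_im, Complex.conj_re, Complex.conj_im,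
      Complex.add_re, Complex.add_im, Complex.ofReal_re, Complex.ofReal_im, mul_zero,
      Complex.zero_re] at h
    rw [Complex.normSq_apply]
    linear_combination h
  have re_mul_neg : z.re * (Complex.normSq z + b) < 0 := by
    rw [re_mul_eq]
    exact neg_neg_of_pos (mul_pos ha normSq_pos)
  exact neg_of_mul_neg_left re_mul_neg (by positivity)

theorem isHurwitz_of_trace_neg_of_det_pos {A : Matrix (Fin 2) (Fin 2) ℝ}
    (htrace : A.trace < 0) (hdet : 0 < A.det) : IsHurwitz A := by
  intro μ hμ
  have hμ_eq : μ ^ 2 - A.trace * μ + A.det = 0 := by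
    rw [charpoly_map, charpoly_fin_two] at hμ
    simpa using hμ
  refine re_neg_of_sq_add_mul_add_eq_zero (neg_pos.mpr htrace) hdet ?_
  push_cast
  linear_combination hμ_eq

theorem stmt_10_general {δ kv Lf c kp : ℝ} (hδ : δ < 1) (hkv : 0 < kv) (hcLf : 0 ≤ c * Lf)
    (hkp : (2 - δ) / (1 - δ) * (c * Lf) < kp) :
    IsHurwitz !![-(1 - δ) * kv, Lf; c * kv, -kp + c * Lf] := by
  have hδ' : 0 < 1 - δ := sub_pos.mpr hδ
  apply isHurwitz_of_trace_neg_of_det_pos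
  · have one_le_factor : 1 ≤ (2 - δ) / (1 - δ) := by
      rw [one_le_div hδ']
      linarith
    have cLf_lt_kp : c * Lf < kp := (le_mul_of_one_le_left hcLf one_le_factor).trans_lt hkp
    rw [trace_fin_two_of]
    linarith [mul_pos hδ' hkv]
  · have det_eq : det !![-(1 - δ) * kv, Lf; c * kv, -kp + c * Lf] =
        (1 - δ) * kv * (kp - (2 - δ) / (1 - δ) * (c * Lf)) := by
      rw [det_fin_two_of]
      field_simp
      ring
    rw [det_eq]
    exact mul_pos (mul_pos hδ' hkv) (sub_pos.mpr hkp)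

/-- If `δ ∈ (0,1)`, `k_v, L_f, L_φ > 0`, `N ≥ 1` and
`k_p > ((2 − δ)/(1 − δ)) N L_φ L_f`, then the matrix
`A = [[−(1−δ)k_v, L_f], [N L_φ k_v, −k_p + N L_φ L_f]]` is Hurwitz: every complex
eigenvalue (root of the characteristic polynomial) has strictly negative real part. -/
theorem stmt_10 (δ kv Lf Lφ kp : ℝ) (N : ℕ)
    (hδ0 : 0 < δ) (hδ1 : δ < 1) (hkv : 0 < kv) (hLf : 0 < Lf) (hLφ : 0 < Lφ)
    (hN : 0 < N) (hkp : ((2 - δ) / (1 - δ)) * ((N : ℝ) * Lφ * Lf) < kp) :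
    ∀ μ : ℂ,
      ((!![-(1 - δ) * kv, Lf; (N : ℝ) * Lφ * kv, -kp + (N : ℝ) * Lφ * Lf]).map
          (algebraMap ℝ ℂ)).charpoly.IsRoot μ →
      μ.re < 0 :=
  stmt_10_general hδ1 hkv (by positivity) hkp
end

section
/- Let a, d > 0 and b, e, c_1, c_2 ≥ 0 with b·e < a·d. Let V_1, V_2 : [0, ∞) → [0, ∞) be continuous functions whose upper right Dini derivatives satisfy D⁺V_1(t) ≤ −a V_1(t) + b V_2(t) + c_1 and D⁺V_2(t) ≤ e V_1(t) − d V_2(t) + c_2 for all t ≥ 0. Then there exist positive constants C_1, C_2, λ, depending only on a, b, d, e, such that for i = 1, 2 and all t ≥ 0, V_i(t) ≤ max{ C_1 e^{−λ t} (V_1(0) + V_2(0)), C_2 (c_1 + c_2) }. -/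
open Filter Topology

/-- The upper right Dini derivative `D⁺V(t) = limsup_{h → 0⁺} (V(t+h) − V(t))/h`,
valued in `EReal`. -/
noncomputable def upperDini (V : ℝ → ℝ) (t : ℝ) : EReal :=
  limsup (fun h : ℝ => (((V (t + h) - V t) / h : ℝ) : EReal)) (𝓝[>] 0)

/-!
If a positive row vector `p` satisfies `p A ≤ -λ p`, then along a nonnegative solution of
`D⁺V ≤ A V + c` the weighted sum `W = p · V` satisfies `D⁺W ≤ -λ W + p · c`, so Grönwall's
inequality bounds `W`, and with it each `Vᵢ ≤ W / pᵢ`. For `A = [[-a, b], [e, -d]]` the choice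
`p = (d + e, a + b)` gives `p A = -(a d - b e) (1, 1)`, which is negative by the small-gain
condition.
-/

open Matrix

section UpperDini

variable {V W : ℝ → ℝ} {t : ℝ}

theorem upperDini_zero (t : ℝ) : upperDini (fun _ => 0) t = 0 := by
  simp [upperDini]

theorem upperDini_add_le {v w : ℝ} (hV : upperDini V t ≤ v) (hW : upperDini W t ≤ w) :
    upperDini (fun s => V s + W s) t ≤ ((v + w : ℝ) : EReal) := by
  have hV_top : upperDini V t ≠ ⊤ := ne_top_of_le_ne_top (EReal.coe_ne_top v) hV
  have hW_top : upperDini W t ≠ ⊤ := ne_top_of_le_ne_top (EReal.coe_ne_top w) hW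
  calc upperDini (fun s => V s + W s) t
      = limsup ((fun h : ℝ => (((V (t + h) - V t) / h : ℝ) : EReal)) +
          fun h : ℝ => (((W (t + h) - W t) / h : ℝ) : EReal)) (𝓝[>] 0) := by
        refine limsup_congr (Eventually.of_forall fun h => ?_)
        rw [Pi.add_apply, ← EReal.coe_add, ← add_div, add_sub_add_comm]
    _ ≤ upperDini V t + upperDini W t := EReal.limsup_add_le (.inr hW_top) (.inl hV_top)
    _ ≤ ((v + w : ℝ) : EReal) := add_le_add hV hW

theorem upperDini_const_mul {r : ℝ} (hr : 0 ≤ r) (V : ℝ → ℝ) (t : ℝ) :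
    upperDini (fun s => r * V s) t = r * upperDini V t := by
  simp only [upperDini, ← mul_sub, mul_div_assoc, EReal.coe_mul]
  exact EReal.limsup_const_mul_of_nonneg_of_ne_top (EReal.coe_nonneg.2 hr) (EReal.coe_ne_top r)

theorem upperDini_const_mul_le {r v : ℝ} (hr : 0 ≤ r) (hV : upperDini V t ≤ v) :
    upperDini (fun s => r * V s) t ≤ ((r * v : ℝ) : EReal) := by
  rw [upperDini_const_mul hr, EReal.coe_mul]
  exact mul_le_mul_of_nonneg_left hV (EReal.coe_nonneg.2 hr)

theorem upperDini_dotProduct_le {ι : Type*} [Fintype ι] {p v : ι → ℝ} {V : ℝ → ι → ℝ}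
    (hp : 0 ≤ p) (hV : ∀ i, upperDini (fun s => V s i) t ≤ v i) :
    upperDini (fun s => p ⬝ᵥ V s) t ≤ ((p ⬝ᵥ v : ℝ) : EReal) := by
  classical
  suffices ∀ I : Finset ι, upperDini (fun s => ∑ i ∈ I, p i * V s i) t ≤
      ((∑ i ∈ I, p i * v i : ℝ) : EReal) from this Finset.univ
  intro I
  induction I using Finset.induction_on with
  | empty => simp [upperDini_zero]
  | insert i I hi ih =>
    simp only [Finset.sum_insert hi]
    exact upperDini_add_le (upperDini_const_mul_le (hp i) (hV i)) ih

theorem eventually_slope_lt_of_upperDini_lt {r : ℝ} (h : upperDini V t < r) :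
    ∀ᶠ z in 𝓝[>] t, slope V t z < r := by
  have hmap : map (t + ·) (𝓝[>] 0) = 𝓝[>] t := by
    rw [map_add_left_nhdsGT, add_zero]
  rw [← hmap, eventually_map]
  filter_upwards [eventually_lt_of_limsup_lt h] with s hs
  rwa [slope_def_field, add_sub_cancel_left, ← EReal.coe_lt_coe_iff]

theorem le_gronwallBound_of_upperDini_le {K ε x y : ℝ} (hV : ContinuousOn V (Set.Icc x y))
    (hD : ∀ s ∈ Set.Ico x y, upperDini V s ≤ ((K * V s + ε : ℝ) : EReal)) :
    ∀ s ∈ Set.Icc x y, V s ≤ gronwallBound (V x) K ε (s - x) := by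
  refine le_gronwallBound_of_liminf_deriv_right_le hV (fun s hs r hr => ?_) le_rfl fun s _ => le_rfl
  exact (eventually_slope_lt_of_upperDini_lt
    ((hD s hs).trans_lt (EReal.coe_lt_coe_iff.2 hr))).frequently

theorem le_exp_mul_add_div_of_upperDini_le {lam K : ℝ} (hlam : 0 < lam) (hK : 0 ≤ K)
    (hV : ContinuousOn V (Set.Ici 0))
    (hD : ∀ s, 0 ≤ s → upperDini V s ≤ ((-lam * V s + K : ℝ) : EReal)) (ht : 0 ≤ t) :
    V t ≤ Real.exp (-lam * t) * V 0 + K / lam := by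
  have hbound := le_gronwallBound_of_upperDini_le (hV.mono Set.Icc_subset_Ici_self)
    (fun s hs => hD s hs.1) t ⟨ht, le_rfl⟩
  rw [gronwallBound_of_K_ne_0 (neg_ne_zero.2 hlam.ne'), sub_zero] at hbound
  have hrest : 0 ≤ K / lam * Real.exp (-lam * t) := by positivity
  calc V t ≤ V 0 * Real.exp (-lam * t) + K / -lam * (Real.exp (-lam * t) - 1) := hbound
    _ = Real.exp (-lam * t) * V 0 + K / lam - K / lam * Real.exp (-lam * t) := by
      rw [div_neg]; ring
    _ ≤ Real.exp (-lam * t) * V 0 + K / lam := sub_le_self _ hrest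

end UpperDini

section LinearSystem

variable {ι : Type*} [Fintype ι] {A : Matrix ι ι ℝ} {p c : ι → ℝ} {V : ℝ → ι → ℝ} {lam t : ℝ}

theorem dotProduct_le_of_upperDini_le_mulVec (hp : 0 ≤ p) (hc : 0 ≤ c) (hlam : 0 < lam)
    (hA : p ᵥ* A ≤ -lam • p) (hV : ContinuousOn V (Set.Ici 0)) (hV_nonneg : ∀ s, 0 ≤ s → 0 ≤ V s)
    (hD : ∀ s, 0 ≤ s → ∀ i, upperDini (fun u => V u i) s ≤ (((A *ᵥ V s + c) i : ℝ) : EReal))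
    (ht : 0 ≤ t) :
    p ⬝ᵥ V t ≤ Real.exp (-lam * t) * (p ⬝ᵥ V 0) + p ⬝ᵥ c / lam := by
  refine le_exp_mul_add_div_of_upperDini_le hlam (dotProduct_nonneg_of_nonneg hp hc)
    (continuousOn_finsetSum _ fun i _ => continuousOn_const.mul (continuousOn_pi.1 hV i))
    (fun s hs => ?_) ht
  refine (upperDini_dotProduct_le hp (hD s hs)).trans (EReal.coe_le_coe_iff.2 ?_)
  calc p ⬝ᵥ (A *ᵥ V s + c) = (p ᵥ* A) ⬝ᵥ V s + p ⬝ᵥ c := by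
        rw [dotProduct_add, dotProduct_mulVec]
    _ ≤ (-lam • p) ⬝ᵥ V s + p ⬝ᵥ c :=
        add_le_add_left (dotProduct_le_dotProduct_of_nonneg_right hA (hV_nonneg s hs)) _
    _ = -lam * (p ⬝ᵥ V s) + p ⬝ᵥ c := by rw [smul_dotProduct, smul_eq_mul]

theorem dotProduct_le_mul_sum {M : ℝ} {v : ι → ℝ} (hpM : ∀ i, p i ≤ M) (hv : 0 ≤ v) :
    p ⬝ᵥ v ≤ M * ∑ i, v i := by
  rw [Finset.mul_sum]
  exact Finset.sum_le_sum fun i _ => mul_le_mul_of_nonneg_right (hpM i) (hv i)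

theorem mul_apply_le_dotProduct {m : ℝ} {v : ι → ℝ} (hp : 0 ≤ p) (hv : 0 ≤ v) {i : ι}
    (hm : m ≤ p i) : m * v i ≤ p ⬝ᵥ v :=
  (mul_le_mul_of_nonneg_right hm (hv i)).trans <|
    Finset.single_le_sum (f := fun j => p j * v j) (fun j _ => mul_nonneg (hp j) (hv j))
      (Finset.mem_univ i)

theorem apply_le_max_of_upperDini_le_mulVec {m M : ℝ} (hm : 0 < m) (hmp : ∀ i, m ≤ p i)
    (hpM : ∀ i, p i ≤ M) (hc : 0 ≤ c) (hlam : 0 < lam) (hA : p ᵥ* A ≤ -lam • p)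
    (hV : ContinuousOn V (Set.Ici 0)) (hV_nonneg : ∀ s, 0 ≤ s → 0 ≤ V s)
    (hD : ∀ s, 0 ≤ s → ∀ i, upperDini (fun u => V u i) s ≤ (((A *ᵥ V s + c) i : ℝ) : EReal))
    (ht : 0 ≤ t) (i : ι) :
    V t i ≤ max (2 * M / m * Real.exp (-lam * t) * ∑ j, V 0 j)
      (2 * M / m / lam * ∑ j, c j) := by
  have hp : 0 ≤ p := fun j => hm.le.trans (hmp j)
  have hweighted : m * V t i ≤
      Real.exp (-lam * t) * (M * ∑ j, V 0 j) + M * (∑ j, c j) / lam :=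
    calc m * V t i ≤ p ⬝ᵥ V t := mul_apply_le_dotProduct hp (hV_nonneg t ht) (hmp i)
      _ ≤ Real.exp (-lam * t) * (p ⬝ᵥ V 0) + p ⬝ᵥ c / lam :=
        dotProduct_le_of_upperDini_le_mulVec hp hc hlam hA hV hV_nonneg hD ht
      _ ≤ Real.exp (-lam * t) * (M * ∑ j, V 0 j) + M * (∑ j, c j) / lam := by
        gcongr
        · exact dotProduct_le_mul_sum hpM (hV_nonneg 0 le_rfl)
        · exact dotProduct_le_mul_sum hpM hc
  set X := 2 * M / m * Real.exp (-lam * t) * ∑ j, V 0 j with hX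
  set Y := 2 * M / m / lam * ∑ j, c j with hY
  calc V t i ≤ (Real.exp (-lam * t) * (M * ∑ j, V 0 j) + M * (∑ j, c j) / lam) / m :=
        (le_div_iff₀' hm).2 hweighted
    _ = (X + Y) / 2 := by rw [hX, hY]; ring
    _ ≤ max X Y := by linarith [le_max_left X Y, le_max_right X Y]

theorem exists_forall_le_max_of_vecMul_neg (hp : ∀ i, 0 < p i) (hA : ∀ i, (p ᵥ* A) i < 0) :
    ∃ C₁ C₂ lam : ℝ, 0 < C₁ ∧ 0 < C₂ ∧ 0 < lam ∧
      ∀ c : ι → ℝ, 0 ≤ c → ∀ V : ℝ → ι → ℝ, ContinuousOn V (Set.Ici 0) →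
        (∀ s, 0 ≤ s → 0 ≤ V s) →
        (∀ s, 0 ≤ s → ∀ i, upperDini (fun u => V u i) s ≤ (((A *ᵥ V s + c) i : ℝ) : EReal)) →
        ∀ t, 0 ≤ t → ∀ i,
          V t i ≤ max (C₁ * Real.exp (-lam * t) * ∑ j, V 0 j) (C₂ * ∑ j, c j) := by
  obtain ⟨m, hm, hmp⟩ : ∃ m > 0, ∀ i, m ≤ p i := by
    obtain ⟨m, hm, hmp⟩ := Pi.exists_forall_pos_add_lt hp
    exact ⟨m, hm, fun i => (zero_add m ▸ hmp i).le⟩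
  obtain ⟨M, hM, hpM⟩ : ∃ M > 0, ∀ i, p i ≤ M := by
    obtain ⟨M, hpM⟩ := Finite.exists_le p
    exact ⟨max M 1, by positivity, fun i => le_max_of_le_left (hpM i)⟩
  obtain ⟨δ, hδ, hδA⟩ := Pi.exists_forall_pos_add_lt hA
  have hdecay : p ᵥ* A ≤ -(δ / M) • p := fun i =>
    calc (p ᵥ* A) i ≤ -(δ / M * M) := by rw [div_mul_cancel₀ δ hM.ne']; linarith [hδA i]
      _ ≤ -(δ / M * p i) := neg_le_neg (mul_le_mul_of_nonneg_left (hpM i) (by positivity))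
      _ = (-(δ / M) • p) i := by rw [Pi.smul_apply, smul_eq_mul, neg_mul]
  exact ⟨2 * M / m, 2 * M / m / (δ / M), δ / M, by positivity, by positivity, by positivity,
    fun c hc V hV hV_nonneg hD t ht => apply_le_max_of_upperDini_le_mulVec hm hmp hpM hc
      (by positivity) hdecay hV hV_nonneg hD ht⟩

end LinearSystem

theorem smallGain_weights_vecMul (a b d e : ℝ) :
    ![d + e, a + b] ᵥ* !![-a, b; e, -d] = fun _ => b * e - a * d := by
  refine funext (Fin.forall_fin_two.2 ⟨?_, ?_⟩) <;> rw [vecMul, vec2_dotProduct]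
  · change (d + e) * -a + (a + b) * e = b * e - a * d
    ring
  · change (d + e) * b + (a + b) * -d = b * e - a * d
    ring

/-- Small-gain comparison lemma: if `a, d > 0`, `b, e ≥ 0` with
`b e < a d`, then there are constants `C₁, C₂, λ > 0` (depending only on `a, b, d, e`)
such that for all `c₁, c₂ ≥ 0` and all continuous nonnegative `V₁, V₂` on `[0, ∞)`
satisfying `D⁺V₁ ≤ −a V₁ + b V₂ + c₁` and `D⁺V₂ ≤ e V₁ − d V₂ + c₂`, one has
`Vᵢ(t) ≤ max{C₁ e^{−λ t}(V₁(0) + V₂(0)), C₂ (c₁ + c₂)}` for all `t ≥ 0`. -/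
theorem stmt_12 (a b d e : ℝ) (ha : 0 < a) (hd : 0 < d) (hb : 0 ≤ b) (he : 0 ≤ e)
    (hbe : b * e < a * d) :
    ∃ C₁ C₂ lam : ℝ, 0 < C₁ ∧ 0 < C₂ ∧ 0 < lam ∧
      ∀ c₁ c₂ : ℝ, 0 ≤ c₁ → 0 ≤ c₂ →
      ∀ V₁ V₂ : ℝ → ℝ,
        ContinuousOn V₁ (Set.Ici 0) → ContinuousOn V₂ (Set.Ici 0) →
        (∀ t, 0 ≤ t → 0 ≤ V₁ t) → (∀ t, 0 ≤ t → 0 ≤ V₂ t) →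
        (∀ t, 0 ≤ t → upperDini V₁ t ≤ ((-a * V₁ t + b * V₂ t + c₁ : ℝ) : EReal)) →
        (∀ t, 0 ≤ t → upperDini V₂ t ≤ ((e * V₁ t + -d * V₂ t + c₂ : ℝ) : EReal)) →
        ∀ t, 0 ≤ t →
          V₁ t ≤ max (C₁ * Real.exp (-lam * t) * (V₁ 0 + V₂ 0)) (C₂ * (c₁ + c₂)) ∧
          V₂ t ≤ max (C₁ * Real.exp (-lam * t) * (V₁ 0 + V₂ 0)) (C₂ * (c₁ + c₂)) := by
  have hp : ∀ i, 0 < ![d + e, a + b] i := Fin.forall_fin_two.2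
    ⟨add_pos_of_pos_of_nonneg hd he, add_pos_of_pos_of_nonneg ha hb⟩
  have hA : ∀ i, (![d + e, a + b] ᵥ* !![-a, b; e, -d]) i < 0 := fun i => by
    rw [smallGain_weights_vecMul]
    exact sub_neg.2 hbe
  obtain ⟨C₁, C₂, lam, hC₁, hC₂, hlam, hbound⟩ := exists_forall_le_max_of_vecMul_neg hp hA
  refine ⟨C₁, C₂, lam, hC₁, hC₂, hlam, ?_⟩
  intro c₁ c₂ hc₁ hc₂ V₁ V₂ hV₁ hV₂ hV₁_nonneg hV₂_nonneg hD₁ hD₂ t ht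
  have hsystem : ∀ s, 0 ≤ s → ∀ i, upperDini (fun u => ![V₁ u, V₂ u] i) s ≤
      (((!![-a, b; e, -d] *ᵥ ![V₁ s, V₂ s] + ![c₁, c₂]) i : ℝ) : EReal) := fun s hs =>
    Fin.forall_fin_two.2
      ⟨by simpa [mul_comm] using hD₁ s hs, by simpa [mul_comm] using hD₂ s hs⟩
  simpa [Fin.forall_fin_two] using hbound ![c₁, c₂] (Fin.forall_fin_two.2 ⟨hc₁, hc₂⟩)
    (fun s => ![V₁ s, V₂ s]) (continuousOn_pi.2 (Fin.forall_fin_two.2 ⟨hV₁, hV₂⟩))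
    (fun s hs => Fin.forall_fin_two.2 ⟨hV₁_nonneg s hs, hV₂_nonneg s hs⟩) hsystem t ht
end
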